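/- arXiv:1901.06155 — 4 statements merged into one kernel-verified Lean document; each statement's English description precedes it below -/
import Mathlib

section
/- The hexagon F admits the Minkowski decomposition into two lattice triangles: F equals the Minkowski sum conv{(0,0),(-1,0),(-1,-1)} + conv{(0,0),(1,0),(1,1)}, where the Minkowski sum of subsets A, B of ℝ² is {a + b | a ∈ A, b ∈ B}. -/
open Pointwise

/-- The hexagon `F`, the convex hull of six lattice points in `ℝ²`. -/
noncomputable def hexagonF : Set (ℝ × ℝ) :=
  convexHull ℝ {(1, 0), (1, 1), (0, 1), (-1, 0), (-1, -1), (0, -1)}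

/-- The hexagon `F` is the Minkowski sum of the two lattice triangles
`conv{(0,0),(-1,0),(-1,-1)}` and `conv{(0,0),(1,0),(1,1)}`. -/
theorem hexagon_minkowski_two_triangles :
    hexagonF =
      convexHull ℝ {((0 : ℝ), (0 : ℝ)), (-1, 0), (-1, -1)} +
        convexHull ℝ {((0 : ℝ), (0 : ℝ)), (1, 0), (1, 1)} := by
  rw [← convexHull_add, hexagonF]
  apply Set.Subset.antisymm
  · apply convexHull_mono
    rintro p hp
    simp only [Set.mem_insert_iff, Set.mem_singleton_iff] at hp
    rw [Set.mem_add]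
    rcases hp with rfl | rfl | rfl | rfl | rfl | rfl
    · exact ⟨(0, 0), by simp, (1, 0), by simp, by simp⟩
    · exact ⟨(0, 0), by simp, (1, 1), by simp, by simp⟩
    · exact ⟨(-1, 0), by simp, (1, 1), by simp, by simp⟩
    · exact ⟨(-1, 0), by simp, (0, 0), by simp, by simp⟩
    · exact ⟨(-1, -1), by simp, (0, 0), by simp, by simp⟩
    · exact ⟨(-1, -1), by simp, (1, 0), by simp, by simp⟩
  · apply convexHull_min _ (convex_convexHull ℝ _)
    have h0 : ((0 : ℝ), (0 : ℝ)) ∈ convexHull ℝ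
        ({(1, 0), (1, 1), (0, 1), (-1, 0), (-1, -1), (0, -1)} : Set (ℝ × ℝ)) := by
      have h := convex_convexHull ℝ
        ({(1, 0), (1, 1), (0, 1), (-1, 0), (-1, -1), (0, -1)} : Set (ℝ × ℝ))
      have h1 := h (subset_convexHull ℝ _ (by simp : ((1 : ℝ), (0 : ℝ)) ∈ _))
        (subset_convexHull ℝ _ (by simp : ((-1 : ℝ), (0 : ℝ)) ∈ _))
        (by norm_num : (0 : ℝ) ≤ 1 / 2) (by norm_num : (0 : ℝ) ≤ 1 / 2) (by norm_num)
      simpa using h1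
    rintro p hp
    obtain ⟨a, ha, b, hb, rfl⟩ := Set.mem_add.1 hp
    simp only [Set.mem_insert_iff, Set.mem_singleton_iff] at ha hb
    rcases ha with rfl | rfl | rfl <;> rcases hb with rfl | rfl | rfl <;>
      norm_num only [Prod.mk_add_mk] <;>
      first
        | exact h0
        | exact subset_convexHull ℝ _ (by simp)
end

section
/- The set of lattice points of the polytope P, i.e., the set of points of ℤ³ lying in P, consists of exactly the nine points (1,0,1), (1,1,1), (0,1,1), (-1,0,1), (-1,-1,1), (0,-1,1), (0,0,-1), (0,0,1), and (0,0,0). -/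
noncomputable section

/-- The polytope `P ⊆ ℝ³`: the pyramid over the hexagon `F × {1}` with apex `(0,0,-1)`. -/
def polytopeP : Set (ℝ × ℝ × ℝ) :=
  convexHull ℝ {(1, 0, 1), (1, 1, 1), (0, 1, 1), (-1, 0, 1), (-1, -1, 1), (0, -1, 1),
    (0, 0, -1)}

/-- The inclusion of the lattice `ℤ³` into `ℝ³`. -/
def toReal3 (v : ℤ × ℤ × ℤ) : ℝ × ℝ × ℝ := ((v.1 : ℝ), (v.2.1 : ℝ), (v.2.2 : ℝ))

/-- The half-space description contains the polytope. -/
theorem polytopeP_subset : polytopeP ⊆ {p : ℝ × ℝ × ℝ | p.2.2 ≤ 1 ∧ 2 * p.1 ≤ p.2.2 + 1 ∧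
    -(2 * p.1) ≤ p.2.2 + 1 ∧ 2 * p.2.1 ≤ p.2.2 + 1 ∧ -(2 * p.2.1) ≤ p.2.2 + 1 ∧
    2 * (p.1 - p.2.1) ≤ p.2.2 + 1 ∧ 2 * (p.2.1 - p.1) ≤ p.2.2 + 1} := by
  apply convexHull_min
  · intro p hp
    simp only [Set.mem_insert_iff, Set.mem_singleton_iff] at hp
    rcases hp with rfl | rfl | rfl | rfl | rfl | rfl | rfl <;> norm_num
  · rintro ⟨x, y, z⟩ ⟨h1, h2, h3, h4, h5, h6, h7⟩ ⟨x', y', z'⟩ ⟨k1, k2, k3, k4, k5, k6, k7⟩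
      a b ha hb hab
    obtain rfl : b = 1 - a := by linarith
    simp only [Set.mem_setOf_eq, Prod.smul_mk, Prod.mk_add_mk, smul_eq_mul] at *
    refine ⟨?_, ?_, ?_, ?_, ?_, ?_, ?_⟩
    · nlinarith [mul_le_mul_of_nonneg_left h1 ha, mul_le_mul_of_nonneg_left k1 hb]
    · nlinarith [mul_le_mul_of_nonneg_left h2 ha, mul_le_mul_of_nonneg_left k2 hb]
    · nlinarith [mul_le_mul_of_nonneg_left h3 ha, mul_le_mul_of_nonneg_left k3 hb]
    · nlinarith [mul_le_mul_of_nonneg_left h4 ha, mul_le_mul_of_nonneg_left k4 hb]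
    · nlinarith [mul_le_mul_of_nonneg_left h5 ha, mul_le_mul_of_nonneg_left k5 hb]
    · nlinarith [mul_le_mul_of_nonneg_left h6 ha, mul_le_mul_of_nonneg_left k6 hb]
    · nlinarith [mul_le_mul_of_nonneg_left h7 ha, mul_le_mul_of_nonneg_left k7 hb]

theorem mid_mem_polytopeP {p q r : ℝ × ℝ × ℝ} (hp : p ∈ polytopeP) (hq : q ∈ polytopeP)
    (h : (1 / 2 : ℝ) • p + (1 / 2 : ℝ) • q = r) : r ∈ polytopeP := by
  rw [← h]
  exact convex_convexHull ℝ _ hp hq (by norm_num) (by norm_num) (by norm_num)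

theorem top_mem : ((0, 0, 1) : ℝ × ℝ × ℝ) ∈ polytopeP :=
  mid_mem_polytopeP (p := (1, 0, 1)) (q := (-1, 0, 1))
    (subset_convexHull ℝ _ (by simp)) (subset_convexHull ℝ _ (by simp)) (by norm_num)

theorem zero_mem_P : ((0, 0, 0) : ℝ × ℝ × ℝ) ∈ polytopeP :=
  mid_mem_polytopeP (p := (0, 0, 1)) (q := (0, 0, -1))
    top_mem (subset_convexHull ℝ _ (by simp)) (by norm_num)

/-- The lattice points of `P` are exactly the nine points
`(1,0,1), (1,1,1), (0,1,1), (-1,0,1), (-1,-1,1), (0,-1,1), (0,0,-1), (0,0,1), (0,0,0)`. -/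
theorem lattice_points_of_P :
    {v : ℤ × ℤ × ℤ | toReal3 v ∈ polytopeP} =
      {(1, 0, 1), (1, 1, 1), (0, 1, 1), (-1, 0, 1), (-1, -1, 1), (0, -1, 1), (0, 0, -1),
        (0, 0, 1), (0, 0, 0)} := by
  ext ⟨x, y, z⟩
  constructor
  · intro h
    obtain ⟨h1, h2, h3, h4, h5, h6, h7⟩ := polytopeP_subset h
    simp only [toReal3] at h1 h2 h3 h4 h5 h6 h7
    norm_cast at h1 h2 h3 h4 h5 h6 h7
    simp only [Set.mem_insert_iff, Set.mem_singleton_iff, Prod.mk.injEq]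
    omega
  · intro h
    simp only [Set.mem_insert_iff, Set.mem_singleton_iff, Prod.mk.injEq] at h
    rcases h with ⟨rfl, rfl, rfl⟩ | ⟨rfl, rfl, rfl⟩ | ⟨rfl, rfl, rfl⟩ | ⟨rfl, rfl, rfl⟩ |
      ⟨rfl, rfl, rfl⟩ | ⟨rfl, rfl, rfl⟩ | ⟨rfl, rfl, rfl⟩ | ⟨rfl, rfl, rfl⟩ | ⟨rfl, rfl, rfl⟩
    on_goal 8 => simpa [toReal3] using top_mem
    on_goal 8 => simpa [toReal3] using zero_mem_P
    all_goals exact subset_convexHull ℝ _ (by simp [toReal3])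

end
end

section
/- For every natural number d, the constant term of f₂^(2d), i.e., the coefficient of the monomial x⁰y⁰z⁰ in the (2d)-th power of the Laurent polynomial f₂ = z(2 + x + xy + y + x⁻¹ + x⁻¹y⁻¹ + y⁻¹) + z⁻¹, equals the sum over all pairs of natural numbers (l,m) with l + m = d of (2d)! · d! / ((l!)³ · (m!)³). (Together with the vanishing of odd constant terms, this says that the classical period of f₂ equals the regularised quantum period of a general (1,1)-divisor in ℙ² × ℙ².) -/
noncomputable section

open scoped Nat

/-- The Laurent polynomial ring in three variables over `ℚ`:
the group algebra `ℚ[ℤ³]`, where `x^i y^j z^k` corresponds to `(i,j,k)`. -/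
abbrev LaurentQ3 : Type := AddMonoidAlgebra ℚ (ℤ × ℤ × ℤ)

/-- The variable `x`. -/
def X : LaurentQ3 := AddMonoidAlgebra.single (1, 0, 0) 1
/-- The variable `y`. -/
def Y : LaurentQ3 := AddMonoidAlgebra.single (0, 1, 0) 1
/-- The variable `z`. -/
def Z : LaurentQ3 := AddMonoidAlgebra.single (0, 0, 1) 1
/-- The inverse variable `x⁻¹`. -/
def Xinv : LaurentQ3 := AddMonoidAlgebra.single (-1, 0, 0) 1
/-- The inverse variable `y⁻¹`. -/
def Yinv : LaurentQ3 := AddMonoidAlgebra.single (0, -1, 0) 1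
/-- The inverse variable `z⁻¹`. -/
def Zinv : LaurentQ3 := AddMonoidAlgebra.single (0, 0, -1) 1

/-- The Laurent polynomial `f_a = z(a + x + xy + y + x⁻¹ + x⁻¹y⁻¹ + y⁻¹) + z⁻¹`. -/
def f (a : ℚ) : LaurentQ3 :=
  Z * (AddMonoidAlgebra.single 0 a + X + X * Y + Y + Xinv + Xinv * Yinv + Yinv) + Zinv

theorem one_add_single_pow (v : ℤ × ℤ × ℤ) (n : ℕ) :
    (1 + AddMonoidAlgebra.single v 1 : LaurentQ3) ^ n =
      ∑ i ∈ Finset.range (n + 1), AddMonoidAlgebra.single (i • v) (n.choose i : ℚ) := by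
  rw [add_comm, add_pow]
  refine Finset.sum_congr rfl fun i _ => ?_
  rw [one_pow, mul_one, AddMonoidAlgebra.single_pow, one_pow, ← nsmul_eq_mul', AddMonoidAlgebra.smul_single]
  simp

theorem f_two_eq : f 2 = Zinv + Z * ((1 + AddMonoidAlgebra.single (1, 0, 0) 1) *
    (1 + AddMonoidAlgebra.single (0, 1, 0) 1) * (1 + AddMonoidAlgebra.single (-1, -1, 0) 1)) := by
  have h2 : (AddMonoidAlgebra.single 0 2 : LaurentQ3) = 1 + 1 := by
    rw [AddMonoidAlgebra.one_def, ← AddMonoidAlgebra.single_add]; norm_num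
  have hxy : (AddMonoidAlgebra.single (-1, -1, 0) 1 : LaurentQ3) = Xinv * Yinv := by
    simp [Xinv, Yinv, AddMonoidAlgebra.single_mul_single]
  have hx : X * Xinv = 1 := by
    simp [X, Xinv, AddMonoidAlgebra.single_mul_single, AddMonoidAlgebra.one_def]
    rfl
  have hy : Y * Yinv = 1 := by
    simp [Y, Yinv, AddMonoidAlgebra.single_mul_single, AddMonoidAlgebra.one_def]
    rfl
  rw [f, h2, hxy]
  change _ = Zinv + Z * ((1 + X) * (1 + Y) * (1 + Xinv * Yinv))
  linear_combination (-Z * Yinv - Z * Y * Yinv) * hx + (-Z * Xinv - Z) * hy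

theorem f_pow_coeff (d : ℕ) :
    (f 2 ^ (2 * d)).coeff (0, 0, 0) =
      ((2 * d).choose d : ℚ) * ∑ i ∈ Finset.range (d + 1), (d.choose i : ℚ) ^ 3 := by
  have hterm : ∀ m ∈ Finset.range (2 * d + 1),
      ((Z * ((1 + AddMonoidAlgebra.single (1, 0, 0) 1) *
    (1 + AddMonoidAlgebra.single (0, 1, 0) 1) * (1 + AddMonoidAlgebra.single (-1, -1, 0) 1))) ^ m *
      Zinv ^ (2 * d - m) * ((2 * d).choose m : LaurentQ3)).coeff (0, 0, 0) =
      if m = d then ((2 * d).choose d : ℚ) * ∑ i ∈ Finset.range (d + 1), (d.choose i : ℚ) ^ 3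
      else 0 := by
    intro m hm
    have hm' : m ≤ 2 * d := by simpa [Nat.lt_succ_iff] using hm
    rw [← nsmul_eq_mul', mul_pow, mul_pow, mul_pow, one_add_single_pow, one_add_single_pow,
      one_add_single_pow, Z, Zinv, AddMonoidAlgebra.single_pow, AddMonoidAlgebra.single_pow]
    simp only [Finset.sum_mul, Finset.mul_sum, AddMonoidAlgebra.single_mul_single,
      Finset.smul_sum, AddMonoidAlgebra.smul_single, AddMonoidAlgebra.coeff_sum,
      AddMonoidAlgebra.coeff_single, Finsupp.finsetSum_apply, Finsupp.single_apply]
    simp only [Prod.smul_mk, Prod.mk_add_mk, Prod.mk.injEq, nsmul_eq_mul, mul_zero, mul_one,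
      one_pow, zero_add, add_zero, one_mul, mul_neg]
    split_ifs with hmd
    · subst hmd
      refine Finset.sum_congr rfl fun k hk => ?_
      rw [Finset.sum_eq_single_of_mem k hk, Finset.sum_eq_single_of_mem k hk, if_pos]
      · ring
      · refine ⟨by ring, by ring, ?_⟩
        push_cast [hm']
        ring
      · intro i _ hik
        refine if_neg ?_
        rintro ⟨h, -, -⟩
        omega
      · intro j _ hjk
        refine Finset.sum_eq_zero fun i _ => if_neg ?_
        rintro ⟨-, h, -⟩
        omega
    · refine Finset.sum_eq_zero fun k _ => Finset.sum_eq_zero fun j _ =>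
        Finset.sum_eq_zero fun i _ => if_neg ?_
      rintro ⟨-, -, h⟩
      push_cast [hm'] at h
      omega
  rw [f_two_eq, add_comm, add_pow, AddMonoidAlgebra.coeff_sum, Finsupp.finsetSum_apply,
    Finset.sum_congr rfl hterm, Finset.sum_ite_eq', if_pos (by simp; omega)]

theorem constant_term_f_two_even_power (d : ℕ) :
    (f 2 ^ (2 * d)).coeff (0, 0, 0) =
      ∑ p ∈ Finset.HasAntidiagonal.antidiagonal d,
        (((2 * d)! * (d)! : ℕ) : ℚ) / (((p.1)! : ℚ) ^ 3 * ((p.2)! : ℚ) ^ 3) := by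
  rw [f_pow_coeff, Finset.mul_sum, Finset.Nat.sum_antidiagonal_eq_sum_range_succ_mk]
  refine Finset.sum_congr rfl fun i hi => ?_
  have hi' : i ≤ d := by simpa [Nat.lt_succ_iff] using hi
  rw [Nat.cast_choose ℚ hi', Nat.cast_choose ℚ (show d ≤ 2 * d by omega),
    show 2 * d - d = d by omega]
  have := Nat.factorial_ne_zero d
  have := Nat.factorial_ne_zero i
  have := Nat.factorial_ne_zero (d - i)
  push_cast
  field_simp

end
end

section
/- For every natural number d, the constant term of f₃^(2d), i.e., the coefficient of the monomial x⁰y⁰z⁰ in the (2d)-th power of the Laurent polynomial f₃ = z(3 + x + xy + y + x⁻¹ + x⁻¹y⁻¹ + y⁻¹) + z⁻¹, equals the sum over all triples of natural numbers (l,m,n) with l + m + n = d of (2d)! / ((l!)² · (m!)² · (n!)²). (Together with the vanishing of odd constant terms, this says that the classical period of f₃ equals the regularised quantum period of ℙ¹ × ℙ¹ × ℙ¹.) -/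
noncomputable section

open scoped Nat

lemma f_three_eq : f 3 = Z * ((AddMonoidAlgebra.single 0 1 + X + Yinv) *
    (AddMonoidAlgebra.single 0 1 + Xinv + Y)) + Zinv := by
  have h3 : (AddMonoidAlgebra.single 0 3 : LaurentQ3) = 3 := by
    rfl
  have h1 : (AddMonoidAlgebra.single 0 1 : LaurentQ3) = 1 := rfl
  have hx : X * Xinv = 1 := by
    simp [X, Xinv, AddMonoidAlgebra.single_mul_single, AddMonoidAlgebra.one_def]
    rfl
  have hy : Y * Yinv = 1 := by
    simp [Y, Yinv, AddMonoidAlgebra.single_mul_single, AddMonoidAlgebra.one_def]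
    rfl
  rw [f, h3, h1]
  linear_combination (-Z) * hx - Z * hy

lemma pow_expand (k : ℕ) (a b : ℤ × ℤ × ℤ) :
    ((AddMonoidAlgebra.single 0 1 + AddMonoidAlgebra.single a 1 +
      AddMonoidAlgebra.single b 1 : LaurentQ3)) ^ k =
    ∑ t ∈ Finset.Nat.antidiagonalTuple 3 k,
      AddMonoidAlgebra.single (t 1 • a + t 2 • b) (Nat.multinomial Finset.univ t : ℚ) := by
  have h := Finset.sum_pow_eq_sum_piAntidiag (Finset.univ : Finset (Fin 3))
    (![AddMonoidAlgebra.single 0 1, AddMonoidAlgebra.single a 1,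
      AddMonoidAlgebra.single b 1] : Fin 3 → LaurentQ3) k
  have e : Finset.piAntidiag (Finset.univ : Finset (Fin 3)) k =
      Finset.Nat.antidiagonalTuple 3 k := by
    ext t
    simp [Finset.Nat.mem_antidiagonalTuple]
  rw [e] at h
  simp only [Fin.sum_univ_three, Fin.prod_univ_three] at h
  refine Eq.trans h (Finset.sum_congr rfl fun t _ => ?_)
  have hn : ((Nat.multinomial Finset.univ t : ℕ) : LaurentQ3) =
    AddMonoidAlgebra.single 0 (Nat.multinomial Finset.univ t : ℚ) := rfl
  simp [hn, AddMonoidAlgebra.single_pow, AddMonoidAlgebra.single_mul_single]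

lemma term_expand (d k : ℕ) (hk : k ≤ 2 * d) :
    ((Z * ((AddMonoidAlgebra.single 0 1 + X + Yinv) *
    (AddMonoidAlgebra.single 0 1 + Xinv + Y))) ^ k * Zinv ^ (2 * d - k)).coeff (0, 0, 0) =
    if k = d then ∑ t ∈ Finset.Nat.antidiagonalTuple 3 d,
      (Nat.multinomial Finset.univ t : ℚ) ^ 2 else 0 := by
  have key : ((Z * ((AddMonoidAlgebra.single 0 1 + X + Yinv) *
    (AddMonoidAlgebra.single 0 1 + Xinv + Y))) ^ k * Zinv ^ (2 * d - k)) =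
    ∑ t ∈ Finset.Nat.antidiagonalTuple 3 k, ∑ s ∈ Finset.Nat.antidiagonalTuple 3 k,
      AddMonoidAlgebra.single
        ((t 1 : ℤ) - s 1, (s 2 : ℤ) - t 2, 2 * (k : ℤ) - 2 * d)
        ((Nat.multinomial Finset.univ t : ℚ) * (Nat.multinomial Finset.univ s : ℚ)) := by
    rw [mul_pow, mul_pow, X, Yinv, Xinv, Y, pow_expand, pow_expand, Finset.sum_mul_sum,
      mul_right_comm, Finset.mul_sum]
    refine Finset.sum_congr rfl fun t _ => ?_
    rw [Finset.mul_sum]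
    refine Finset.sum_congr rfl fun s _ => ?_
    rw [Z, Zinv, AddMonoidAlgebra.single_pow, AddMonoidAlgebra.single_pow,
      AddMonoidAlgebra.single_mul_single, AddMonoidAlgebra.single_mul_single,
      AddMonoidAlgebra.single_mul_single]
    congr 1
    · ext
      · simp; ring
      · simp; ring
      · simp [Nat.cast_sub hk]; ring
    · simp
  rw [key]
  simp only [AddMonoidAlgebra.coeff_sum, AddMonoidAlgebra.coeff_single, Finsupp.finsetSum_apply,
    Finsupp.single_apply, Prod.mk.injEq]
  split_ifs with h
  · subst h
    refine Finset.sum_congr rfl fun t ht => ?_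
    rw [Finset.sum_eq_single t]
    · simp [sq]
    · intro s hs hne
      rw [if_neg]
      rintro ⟨h1, h2, -⟩
      apply hne
      rw [Finset.Nat.mem_antidiagonalTuple, Fin.sum_univ_three] at hs ht
      ext i
      fin_cases i <;> simp <;> omega
    · intro hh
      exact absurd ht hh
  · refine Finset.sum_eq_zero fun t _ => Finset.sum_eq_zero fun s _ => if_neg ?_
    rintro ⟨-, -, h3⟩
    omega

/-- The constant term of `f₃ ^ (2d)` equals
`∑_{l+m+n=d} (2d)! / ((l!)² · (m!)² · (n!)²)`. -/
theorem constant_term_f_three_even_power (d : ℕ) :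
    (f 3 ^ (2 * d)).coeff (0, 0, 0) =
      ∑ t ∈ Finset.Nat.antidiagonalTuple 3 d,
        (((2 * d)! : ℕ) : ℚ) /
          (((t 0)! : ℚ) ^ 2 * ((t 1)! : ℚ) ^ 2 * ((t 2)! : ℚ) ^ 2) := by
  rw [f_three_eq, add_pow]
  simp only [AddMonoidAlgebra.coeff_sum, Finsupp.finsetSum_apply]
  have hc : ∀ (g : LaurentQ3) (n : ℕ), (g * (n : LaurentQ3)).coeff (0, 0, 0) =
      g.coeff (0, 0, 0) * n := by
    intro g n
    rw [mul_comm, ← nsmul_eq_mul, AddMonoidAlgebra.coeff_smul_apply, nsmul_eq_mul, mul_comm]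
  rw [Finset.sum_eq_single d]
  · rw [hc, term_expand d d (by omega), if_pos rfl, Finset.sum_mul]
    refine Finset.sum_congr rfl fun t ht => ?_
    have hs := Nat.multinomial_spec (Finset.univ : Finset (Fin 3)) t
    rw [Finset.Nat.mem_antidiagonalTuple] at ht
    rw [ht, Fin.prod_univ_three] at hs
    have hch := Nat.choose_mul_factorial_mul_factorial (show d ≤ 2 * d by omega)
    rw [show 2 * d - d = d by omega, ← hs] at hch
    rw [eq_div_iff (by positivity), ← hch]
    push_cast
    ring
  · intro k hk hne
    rw [Finset.mem_range] at hk
    rw [hc, term_expand d k (by omega), if_neg hne, zero_mul]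
  · intro h
    exact absurd (Finset.mem_range.2 (by omega)) h

end
end
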